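/- Let K ≥ 1, let δ ≥ 0, and let q₁,…,q_K be reals with total q_S := Σ_{w=1}^{K} q_w ≤ 1 and q_w ≥ q_S/K − δ > 0 for every w. If x := (1 − q_S) + K·δ ≤ 1/2, then Σ_{w=1}^{K} (1/K)·log₂( (1/K)/q_w ) ≤ log₂( 1/(1 − x) ) ≤ 2x. In particular, if the sets produced by the MLF or LLF algorithm satisfy q_{S_w} ≥ q_S/K − p_max for all w, where p_max is the largest string probability in the code, then D(U_K ‖ [q_{S_1},…,q_{S_K}]) ≤ 2[ (1 − q_S) + K·p_max ] whenever (1 − q_S) + K·p_max ≤ 1/2. -/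

import Mathlib

/-!
The hypothesis on `q` says precisely that `q` dominates `(1 - x) • U_K` pointwise, so every
likelihood ratio `(1/K) / q w` is at most `1 / (1 - x)`, and `D(U_K ‖ q)` is an average of their
logarithms. The second bound is Bernoulli's inequality `(1/2)^(2x) ≤ 1 - x` with the exponent
`2x` in `[0, 1]`.
-/

open Real

section RelativeEntropy

variable {ι : Type*} [Fintype ι] {b c : ℝ} {p q : ι → ℝ}

/-- The relative entropy `D(p ‖ q)` of two families of weights, with logarithms to base `b`.
Junk values implement the convention `0 * log (0 / q) = 0`, but an index with `p i ≠ 0` and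
`q i = 0` contributes `0` rather than `+∞`. -/
noncomputable def relEntropy (b : ℝ) (p q : ι → ℝ) : ℝ :=
  ∑ i, p i * logb b (p i / q i)

theorem mul_logb_div_le_of_mul_le {s t : ℝ} (hb : 1 < b) (hc : 0 < c) (hs : 0 ≤ s)
    (hst : c * s ≤ t) : s * logb b (s / t) ≤ s * logb b (1 / c) := by
  rcases hs.eq_or_lt with rfl | hs_pos
  · simp
  have ht : 0 < t := (mul_pos hc hs_pos).trans_le hst
  have hratio : s / t ≤ 1 / c := by
    rwa [div_le_div_iff₀ ht hc, one_mul, mul_comm s c]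
  gcongr

theorem relEntropy_le_logb_one_div_of_mul_le (hb : 1 < b) (hc : 0 < c) (hp : ∀ i, 0 ≤ p i)
    (hp_sum : ∑ i, p i = 1) (hpq : ∀ i, c * p i ≤ q i) :
    relEntropy b p q ≤ logb b (1 / c) :=
  calc relEntropy b p q
    _ ≤ ∑ i, p i * logb b (1 / c) :=
        Finset.sum_le_sum fun i _ => mul_logb_div_le_of_mul_le hb hc (hp i) (hpq i)
    _ = logb b (1 / c) := by rw [← Finset.sum_mul, hp_sum, one_mul]

end RelativeEntropy

theorem neg_le_logb_one_sub_mul {b t : ℝ} (hb : 1 < b) (ht₀ : 0 ≤ t) (ht₁ : t ≤ 1) :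
    -t ≤ logb b (1 - t * (1 - b⁻¹)) := by
  have hb₀ : 0 < b := zero_lt_one.trans hb
  have bernoulli : b ^ (-t) ≤ 1 - t * (1 - b⁻¹) :=
    calc b ^ (-t)
      _ = (1 + (b⁻¹ - 1)) ^ t := by
          rw [add_sub_cancel, inv_rpow hb₀.le, rpow_neg hb₀.le]
      _ ≤ 1 + t * (b⁻¹ - 1) :=
          rpow_one_add_le_one_add_mul_self (by linarith [inv_pos.2 hb₀]) ht₀ ht₁
      _ = 1 - t * (1 - b⁻¹) := by ring
  exact (le_logb_iff_rpow_le hb ((rpow_pos_of_pos hb₀ _).trans_le bernoulli)).2 bernoulli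

theorem logb_two_one_div_one_sub_le {x : ℝ} (hx₀ : 0 ≤ x) (hx₁ : x ≤ 1 / 2) :
    logb 2 (1 / (1 - x)) ≤ 2 * x := by
  have hlog : -(2 * x) ≤ logb 2 (1 - 2 * x * (1 - 2⁻¹)) :=
    neg_le_logb_one_sub_mul one_lt_two (by linarith) (by linarith)
  have harg : 1 - 2 * x * (1 - 2⁻¹) = 1 - x := by ring
  rw [harg] at hlog
  rw [one_div, logb_inv]
  exact neg_le.1 hlog

/-- Let `K ≥ 1`, `δ ≥ 0`, and `q₁,…,q_K` with total
`q_S = ∑_w q_w ≤ 1` and `q_w ≥ q_S/K − δ > 0` for every `w`.  If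
`x = (1 − q_S) + K·δ ≤ 1/2`, then
`∑_w (1/K)·log₂((1/K)/q_w) ≤ log₂(1/(1−x)) ≤ 2x`.  In particular the sets
produced by MLF or LLF (which satisfy `q_{S_w} ≥ q_S/K − p_max`) have
`D(U_K‖[q_{S_1},…,q_{S_K}]) ≤ 2[(1 − q_S) + K·p_max]`. -/
theorem mlf_llf_divergence_upper_bound (K : ℕ) (hK : 1 ≤ K)
    (δ : ℝ) (hδ : 0 ≤ δ) (q : Fin K → ℝ) (qS x : ℝ)
    (hqS : qS = ∑ w, q w) (hqS1 : qS ≤ 1)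
    (hlow : ∀ w, qS / K - δ ≤ q w) (hpos : 0 < qS / K - δ)
    (hx : x = (1 - qS) + K * δ) (hx2 : x ≤ 1 / 2) :
    ∑ w, (1 / (K : ℝ)) * Real.logb 2 ((1 / (K : ℝ)) / q w) ≤ Real.logb 2 (1 / (1 - x))
    ∧ Real.logb 2 (1 / (1 - x)) ≤ 2 * x := by
  have hK₀ : (0 : ℝ) < K := by exact_mod_cast hK
  have hx₀ : 0 ≤ x := by linarith [mul_nonneg hK₀.le hδ]
  have hunif : ∑ _w : Fin K, 1 / (K : ℝ) = 1 := by simp [hK₀.ne']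
  have hdom : ∀ w, (1 - x) * (1 / (K : ℝ)) ≤ q w := fun w =>
    calc (1 - x) * (1 / (K : ℝ))
      _ = qS / K - δ := by rw [hx]; field_simp; ring
      _ ≤ q w := hlow w
  exact ⟨relEntropy_le_logb_one_div_of_mul_le one_lt_two (by linarith)
      (fun _ => one_div_nonneg.2 hK₀.le) hunif hdom,
    logb_two_one_div_one_sub_le hx₀ hx2⟩
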